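/- Let X_1, X_2 be i.i.d. random vectors in ℝ^d with law ν_1 having finite second moments and finite Poincaré constant, and let ν_2 be the law of the standardized sum (X_1 + X_2)/√2. Then, with σ² := σ²(ν_2) = σ²(ν_1), C_p(ν_2) ≤ C_p(ν_1) − (C_p(ν_1)/4) · (C_p(ν_2) − σ²)² / ((C_p(ν_2) − σ²)² + C_p(ν_2) σ²). -/

import Mathlib

open MeasureTheory ProbabilityTheory ENNReal
open scoped RealInnerProductSpace

/-- The Poincaré constant of a Borel probability measure on `ℝ^d`: the smallest constant `C`
such that `Var_μ(f) ≤ C ∫ |∇f|² dμ` for all locally Lipschitz `f : ℝ^d → ℝ`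
(`+∞` if no finite constant works). -/
noncomputable def poincareConst {d : ℕ} (μ : Measure (EuclideanSpace ℝ (Fin d))) : ℝ≥0∞ :=
  sInf {C : ℝ≥0∞ | ∀ f : EuclideanSpace ℝ (Fin d) → ℝ, LocallyLipschitz f →
    evariance f μ ≤ C * ∫⁻ x, ‖gradient f x‖₊ ^ 2 ∂μ}

/-- `σ²(μ) := max_{|α| = 1} Var_μ(x ↦ α·x)`, the largest variance of `μ` in any direction. -/
noncomputable def maxDirVar {d : ℕ} (μ : Measure (EuclideanSpace ℝ (Fin d))) : ℝ :=
  ⨆ α : {a : EuclideanSpace ℝ (Fin d) // ‖a‖ = 1},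
    variance (fun x => ⟪(α : EuclideanSpace ℝ (Fin d)), x⟫) μ

section Kernel

variable {X : Type*} [MeasurableSpace X] {P : Measure X}
  {H : Type*} [NormedAddCommGroup H] [InnerProductSpace ℝ H]

theorem MeasureTheory.MemLp.integrable_inner_two {f g : X → H} (hf : MemLp f 2 P)
    (hg : MemLp g 2 P) : Integrable (fun x => ⟪f x, g x⟫) P := by
  refine Integrable.mono' (hf.norm.integrable_mul hg.norm)
    (hf.aestronglyMeasurable.inner hg.aestronglyMeasurable) (ae_of_all _ fun x => ?_)
  exact norm_inner_le_norm _ _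

omit [InnerProductSpace ℝ H] in
theorem MeasureTheory.MemLp.lintegral_enorm_sq {f : X → H} (hf : MemLp f 2 P) :
    ∫⁻ x, ‖f x‖ₑ ^ 2 ∂P = ENNReal.ofReal (∫ x, ‖f x‖ ^ 2 ∂P) := by
  rw [ofReal_integral_eq_lintegral_ofReal hf.norm.integrable_sq
    (ae_of_all _ fun x => by positivity)]
  simp [ENNReal.ofReal_pow]

omit [InnerProductSpace ℝ H] in
theorem memLp_two_of_lintegral_enorm_sq {f : X → H} (hf : AEStronglyMeasurable f P)
    (h : ∫⁻ x, ‖f x‖ₑ ^ 2 ∂P ≠ ∞) : MemLp f 2 P := by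
  refine ⟨hf, ?_⟩
  rw [eLpNorm_lt_top_iff_lintegral_rpow_enorm_lt_top (by norm_num) (by norm_num)]
  simpa using h.lt_top

omit [InnerProductSpace ℝ H] in
theorem MeasureTheory.MeasurePreserving.integral_comp_aestronglyMeasurable [NormedSpace ℝ H]
    {Y : Type*} [MeasurableSpace Y] {Q : Measure Y} {φ : Y → X} (hφ : MeasurePreserving φ Q P)
    {g : X → H} (hg : AEStronglyMeasurable g P) : ∫ y, g (φ y) ∂Q = ∫ x, g x ∂P := by
  rw [← hφ.map_eq] at hg ⊢
  exact (integral_map hφ.measurable.aemeasurable hg).symm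

variable [IsProbabilityMeasure P]

theorem measurePreserving_prodProdProdComm :
    MeasurePreserving (fun w : (X × X) × X × X => ((w.1.1, w.2.1), (w.1.2, w.2.2)))
      ((P.prod P).prod (P.prod P)) ((P.prod P).prod (P.prod P)) := by
  have h₁ := measurePreserving_prodAssoc P P (P.prod P)
  have h₂ := (MeasurePreserving.id P).prod
    ((measurePreserving_prodAssoc P P P).symm MeasurableEquiv.prodAssoc)
  have h₃ := (MeasurePreserving.id P).prod
    ((Measure.measurePreserving_swap (μ := P) (ν := P)).prod (MeasurePreserving.id P))
  have h₄ := (MeasurePreserving.id P).prod (measurePreserving_prodAssoc P P P)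
  have h₅ := (measurePreserving_prodAssoc P P (P.prod P)).symm MeasurableEquiv.prodAssoc
  exact h₅.comp (h₄.comp (h₃.comp (h₂.comp h₁)))

theorem measurePreserving_proj {i j : X × X → X} (hi : MeasurePreserving i (P.prod P) P)
    (hj : MeasurePreserving j (P.prod P) P) :
    MeasurePreserving (fun w : (X × X) × X × X => (i w.1, j w.2))
      ((P.prod P).prod (P.prod P)) (P.prod P) :=
  hi.prod hj

theorem integral_inner_prod_self [CompleteSpace H] {Y : Type*} [MeasurableSpace Y] {Q : Measure Y}
    [IsProbabilityMeasure Q] {K : Y → H} (hK : MemLp K 2 Q) :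
    ∫ w, ⟪K w.1, K w.2⟫ ∂(Q.prod Q) = ‖∫ y, K y ∂Q‖ ^ 2 := by
  have hi : Integrable K Q := hK.integrable (by norm_num)
  have hf : Integrable (fun w : Y × Y => ⟪K w.1, K w.2⟫) (Q.prod Q) :=
    (hK.comp_measurePreserving measurePreserving_fst).integrable_inner_two
      (hK.comp_measurePreserving measurePreserving_snd)
  rw [integral_prod _ hf]
  simp_rw [integral_inner hi, real_inner_comm (∫ y, K y ∂Q)]
  rw [integral_inner hi, real_inner_self_eq_norm_sq]

/-- Expansion of the second moment of a combination of a symmetric kernel evaluated on a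
`2 × 2` grid of independent points. -/
theorem integral_norm_sq_grid [CompleteSpace H] {K : X × X → H} (hK : MemLp K 2 (P.prod P))
    (hs : ∀ x y, K (x, y) = K (y, x)) (a b c d : ℝ) :
    ∫ w, ‖a • K (w.1.1, w.2.1) + b • K (w.1.2, w.2.1) + c • K (w.1.1, w.2.2)
        + d • K (w.1.2, w.2.2)‖ ^ 2 ∂((P.prod P).prod (P.prod P)) =
      (a ^ 2 + b ^ 2 + c ^ 2 + d ^ 2) * ∫ z, ‖K z‖ ^ 2 ∂(P.prod P)
      + 2 * (a * b + c * d + a * c + b * d) *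
        ∫ w, ⟪K (w.1.1, w.2.1), K (w.1.2, w.2.1)⟫ ∂((P.prod P).prod (P.prod P))
      + 2 * (a * d + b * c) * ‖∫ z, K z ∂(P.prod P)‖ ^ 2 := by
  set Ω := (P.prod P).prod (P.prod P) with hΩ
  have f1 : MeasurePreserving Prod.fst (P.prod P) P := measurePreserving_fst
  have f2 : MeasurePreserving Prod.snd (P.prod P) P := measurePreserving_snd
  have m11 := hK.comp_measurePreserving (measurePreserving_proj f1 f1)
  have m21 := hK.comp_measurePreserving (measurePreserving_proj f2 f1)
  have m12 := hK.comp_measurePreserving (measurePreserving_proj f1 f2)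
  have m22 := hK.comp_measurePreserving (measurePreserving_proj f2 f2)
  simp only [Function.comp_def] at m11 m21 m12 m22
  have sq {i j : X × X → X} (hi : MeasurePreserving i (P.prod P) P)
      (hj : MeasurePreserving j (P.prod P) P) :
      ∫ w, ⟪K (i w.1, j w.2), K (i w.1, j w.2)⟫ ∂Ω = ∫ z, ‖K z‖ ^ 2 ∂(P.prod P) := by
    have h := measurePreserving_proj hi hj
    simp_rw [real_inner_self_eq_norm_sq]
    rw [← h.map_eq, integral_map h.measurable.aemeasurable]
    rw [h.map_eq]
    exact (hK.norm.integrable_sq).aestronglyMeasurable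
  have hsw : MeasurePreserving (MeasurableEquiv.prodComm : X × X ≃ᵐ X × X)
    (P.prod P) (P.prod P) := Measure.measurePreserving_swap
  have t1 := (MeasurePreserving.id (P.prod P)).prod hsw
  have t2 := hsw.prod (MeasurePreserving.id (P.prod P))
  have t3 : MeasurePreserving (MeasurableEquiv.prodComm : (X × X) × X × X ≃ᵐ (X × X) × X × X) Ω Ω :=
    Measure.measurePreserving_swap
  have v34 : ∫ w, ⟪K (w.1.1, w.2.2), K (w.1.2, w.2.2)⟫ ∂Ω
      = ∫ w, ⟪K (w.1.1, w.2.1), K (w.1.2, w.2.1)⟫ ∂Ω :=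
    t1.integral_comp (MeasurableEquiv.prodCongr (.refl _) .prodComm).measurableEmbedding
      (fun w => ⟪K (w.1.1, w.2.1), K (w.1.2, w.2.1)⟫)
  have v13 : ∫ w, ⟪K (w.1.1, w.2.1), K (w.1.1, w.2.2)⟫ ∂Ω
      = ∫ w, ⟪K (w.1.1, w.2.1), K (w.1.2, w.2.1)⟫ ∂Ω := by
    rw [← t3.integral_comp' (fun w => ⟪K (w.1.1, w.2.1), K (w.1.2, w.2.1)⟫)]
    refine integral_congr_ae (ae_of_all _ fun w => ?_)
    simp [hs w.1.1, MeasurableEquiv.prodComm]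
  have v24 : ∫ w, ⟪K (w.1.2, w.2.1), K (w.1.2, w.2.2)⟫ ∂Ω
      = ∫ w, ⟪K (w.1.1, w.2.1), K (w.1.2, w.2.1)⟫ ∂Ω := by
    rw [← v13]
    exact t2.integral_comp (MeasurableEquiv.prodCongr .prodComm (.refl _)).measurableEmbedding
      (fun w => ⟪K (w.1.1, w.2.1), K (w.1.1, w.2.2)⟫)
  have v14 : ∫ w, ⟪K (w.1.1, w.2.1), K (w.1.2, w.2.2)⟫ ∂Ω = ‖∫ z, K z ∂(P.prod P)‖ ^ 2 := by
    rw [← integral_inner_prod_self hK]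
    have h := measurePreserving_prodProdProdComm (P := P)
    conv_rhs => rw [← h.map_eq]
    rw [integral_map h.measurable.aemeasurable]
    rw [h.map_eq]
    exact (MemLp.integrable_inner_two (hK.comp_measurePreserving measurePreserving_fst)
      (hK.comp_measurePreserving measurePreserving_snd)).aestronglyMeasurable
  have v23 : ∫ w, ⟪K (w.1.2, w.2.1), K (w.1.1, w.2.2)⟫ ∂Ω = ‖∫ z, K z ∂(P.prod P)‖ ^ 2 := by
    rw [← v14]
    exact t2.integral_comp (MeasurableEquiv.prodCongr .prodComm (.refl _)).measurableEmbedding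
      (fun w => ⟪K (w.1.1, w.2.1), K (w.1.2, w.2.2)⟫)
  have expand (w : (X × X) × X × X) : ‖a • K (w.1.1, w.2.1) + b • K (w.1.2, w.2.1)
        + c • K (w.1.1, w.2.2) + d • K (w.1.2, w.2.2)‖ ^ 2 =
      a ^ 2 * ⟪K (w.1.1, w.2.1), K (w.1.1, w.2.1)⟫ + b ^ 2 * ⟪K (w.1.2, w.2.1), K (w.1.2, w.2.1)⟫
      + c ^ 2 * ⟪K (w.1.1, w.2.2), K (w.1.1, w.2.2)⟫ + d ^ 2 * ⟪K (w.1.2, w.2.2), K (w.1.2, w.2.2)⟫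
      + 2 * a * b * ⟪K (w.1.1, w.2.1), K (w.1.2, w.2.1)⟫
      + 2 * c * d * ⟪K (w.1.1, w.2.2), K (w.1.2, w.2.2)⟫
      + 2 * a * c * ⟪K (w.1.1, w.2.1), K (w.1.1, w.2.2)⟫
      + 2 * b * d * ⟪K (w.1.2, w.2.1), K (w.1.2, w.2.2)⟫
      + 2 * a * d * ⟪K (w.1.1, w.2.1), K (w.1.2, w.2.2)⟫
      + 2 * b * c * ⟪K (w.1.2, w.2.1), K (w.1.1, w.2.2)⟫ := by
    rw [← real_inner_self_eq_norm_sq]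
    simp only [inner_add_left, inner_add_right, real_inner_smul_left, real_inner_smul_right]
    rw [real_inner_comm (K (w.1.1, w.2.1)) (K (w.1.2, w.2.1)),
      real_inner_comm (K (w.1.1, w.2.1)) (K (w.1.1, w.2.2)),
      real_inner_comm (K (w.1.1, w.2.1)) (K (w.1.2, w.2.2)),
      real_inner_comm (K (w.1.2, w.2.1)) (K (w.1.1, w.2.2)),
      real_inner_comm (K (w.1.2, w.2.1)) (K (w.1.2, w.2.2)),
      real_inner_comm (K (w.1.1, w.2.2)) (K (w.1.2, w.2.2))]
    ring
  simp_rw [expand]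
  have i11 := m11.integrable_inner_two m11
  have i22 := m21.integrable_inner_two m21
  have i33 := m12.integrable_inner_two m12
  have i44 := m22.integrable_inner_two m22
  have i12 := m11.integrable_inner_two m21
  have i34 := m12.integrable_inner_two m22
  have i13 := m11.integrable_inner_two m12
  have i24 := m21.integrable_inner_two m22
  have i14 := m11.integrable_inner_two m22
  have i23 := m21.integrable_inner_two m12
  rw [integral_add (by fun_prop) (by fun_prop), integral_add (by fun_prop) (by fun_prop),
    integral_add (by fun_prop) (by fun_prop), integral_add (by fun_prop) (by fun_prop),
    integral_add (by fun_prop) (by fun_prop), integral_add (by fun_prop) (by fun_prop),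
    integral_add (by fun_prop) (by fun_prop), integral_add (by fun_prop) (by fun_prop),
    integral_add (by fun_prop) (by fun_prop)]
  simp_rw [integral_const_mul]
  rw [sq f1 f1, sq f2 f1, sq f1 f2, sq f2 f2, v34, v13, v24, v14, v23]
  ring

theorem lintegral_enorm_sub_sq_le_evariance {g : X → ℝ} (hg : AEStronglyMeasurable g P) :
    ∫⁻ w, ‖g w.1 - g w.2‖ₑ ^ 2 ∂(P.prod P) ≤ 2 * evariance g P := by
  by_cases h : MemLp g 2 P
  · have h1 : MemLp (fun w : X × X => g w.1) 2 (P.prod P) :=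
      h.comp_measurePreserving measurePreserving_fst
    have h2 : MemLp (fun w : X × X => g w.2) 2 (P.prod P) :=
      h.comp_measurePreserving measurePreserving_snd
    have h12 : MemLp (fun w : X × X => g w.1 - g w.2) 2 (P.prod P) := h1.sub h2
    rw [h12.lintegral_enorm_sq, ← ofReal_variance h, ← ENNReal.ofReal_ofNat,
      ← ENNReal.ofReal_mul (by norm_num)]
    apply le_of_eq
    congr 1
    have e1 : ∫ w : X × X, g w.1 ^ 2 ∂(P.prod P) = ∫ x, g x ^ 2 ∂P := by
      simp [integral_fun_fst (fun x => g x ^ 2)]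
    have e2 : ∫ w : X × X, g w.2 ^ 2 ∂(P.prod P) = ∫ x, g x ^ 2 ∂P := by
      simp [integral_fun_snd (fun x => g x ^ 2)]
    have e3 := integral_prod_mul (μ := P) (ν := P) g g
    rw [variance_eq_sub h]
    simp only [Real.norm_eq_abs, sq_abs, Pi.pow_apply, sub_sq]
    have i1 := h1.integrable_sq
    have i2 := h2.integrable_sq
    have i3 : Integrable (fun w : X × X => g w.1 * g w.2) (P.prod P) := h1.integrable_mul h2
    simp_rw [mul_assoc]
    rw [integral_add (by fun_prop) (by fun_prop), integral_sub (by fun_prop) (by fun_prop),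
      integral_const_mul, e1, e2, e3]
    ring
  · rw [evariance_eq_top hg h]
    simp

omit [InnerProductSpace ℝ H] in
theorem memLp_two_of_lintegral_sub {g : X → H} (hg : StronglyMeasurable g)
    (h : ∫⁻ w, ‖g w.1 - g w.2‖ₑ ^ 2 ∂(P.prod P) ≠ ∞) : MemLp g 2 P := by
  have hm : AEMeasurable (fun w : X × X => ‖g w.1 - g w.2‖ₑ ^ 2) (P.prod P) :=
    (((hg.comp_measurable measurable_fst).sub
      (hg.comp_measurable measurable_snd)).enorm.pow_const 2).aemeasurable
  rw [lintegral_prod_symm _ hm] at h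
  obtain ⟨y, hy⟩ := (ae_lt_top' hm.lintegral_prod_left' h).exists
  have := memLp_two_of_lintegral_enorm_sq (P := P) (f := fun x => g x - g y)
    (hg.sub stronglyMeasurable_const).aestronglyMeasurable hy.ne
  convert this.add (memLp_const (g y)) using 1
  ext x
  simp

end Kernel

section Slices

variable {E : Type*} [NormedAddCommGroup E] [InnerProductSpace ℝ E] [FiniteDimensional ℝ E]

/-- The Poincaré inequality with constant `C`, tested on locally Lipschitz functions. -/
def SatisfiesPoincare [MeasurableSpace E] (μ : Measure E) (C : ℝ≥0∞) : Prop :=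
  ∀ f : E → ℝ, LocallyLipschitz f → evariance f μ ≤ C * ∫⁻ x, ‖gradient f x‖ₑ ^ 2 ∂μ

omit [FiniteDimensional ℝ E] in
theorem LocallyLipschitz.slice_combination {f : E → ℝ} (hf : LocallyLipschitz f) (s c : ℝ)
    (y y' : E) : LocallyLipschitz (fun x => f (s • (x + y)) + c * f (s • (x + y'))) := by
  have hl (z : E) : LocallyLipschitz (fun x => s • (x + z)) :=
    ((lipschitzWith_smul s).comp ((LipschitzWith.id).add (LipschitzWith.const z))).locallyLipschitz
  exact (hf.comp (hl y)).add
    ((lipschitzWith_smul c).locallyLipschitz.comp (hf.comp (hl y')))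

omit [FiniteDimensional ℝ E] in
theorem differentiableAt_comp_smul_add_iff {f : E → ℝ} {s : ℝ} (hs : s ≠ 0) (x y : E) :
    DifferentiableAt ℝ (fun x => f (s • (x + y))) x ↔ DifferentiableAt ℝ f (s • (x + y)) := by
  constructor
  · intro h
    have hx : x = s⁻¹ • (s • (x + y)) - y := by simp [hs]
    have h' : DifferentiableAt ℝ (fun z : E => s⁻¹ • z - y) (s • (x + y)) := by fun_prop
    rw [hx] at h
    have := DifferentiableAt.comp (s • (x + y)) (f := fun z : E => s⁻¹ • z - y) h h'
    simpa only [Function.comp_def, sub_add_cancel, smul_inv_smul₀ hs] using this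
  · intro h
    exact DifferentiableAt.comp x (f := fun x => s • (x + y)) h (by fun_prop)

theorem HasGradientAt.comp_smul_add {f : E → ℝ} {s : ℝ} {x y u : E}
    (h : HasGradientAt f u (s • (x + y))) :
    HasGradientAt (fun x => f (s • (x + y))) (s • u) x := by
  rw [hasGradientAt_iff_hasFDerivAt] at h ⊢
  have h' : HasFDerivAt (fun x : E => s • (x + y)) (s • ContinuousLinearMap.id ℝ E) x :=
    ((hasFDerivAt_id x).add_const y).const_smul s
  refine (HasFDerivAt.comp x h h').congr_fderiv ?_
  ext v
  simp

theorem HasGradientAt.add_const_mul {f g : E → ℝ} {x u v : E} (hf : HasGradientAt f u x)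
    (hg : HasGradientAt g v x) (c : ℝ) : HasGradientAt (fun x => f x + c * g x) (u + c • v) x := by
  rw [hasGradientAt_iff_hasFDerivAt] at hf hg ⊢
  refine (hf.add (hg.const_mul c)).congr_fderiv ?_
  simp

/-- Away from the points where both summands fail to be differentiable but their sum does not,
the gradient of `x ↦ f (s • (x + y)) + c * f (s • (x + y'))` obeys the chain rule as an
inequality, despite the convention that gradients vanish at points of non-differentiability. -/
theorem enorm_gradient_slice_combination_le {f : E → ℝ} {s c : ℝ} (hs : s ≠ 0) (x y y' : E)
    (h : ¬ DifferentiableAt ℝ f (s • (x + y)) → ¬ DifferentiableAt ℝ f (s • (x + y')) →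
      c = 0 ∨ ¬ DifferentiableAt ℝ (fun x => f (s • (x + y)) + c * f (s • (x + y'))) x) :
    ‖gradient (fun x => f (s • (x + y)) + c * f (s • (x + y'))) x‖ₑ ≤
      ‖s • (gradient f (s • (x + y)) + c • gradient f (s • (x + y')))‖ₑ := by
  rcases eq_or_ne c 0 with rfl | hc
  · simp only [zero_mul, add_zero, zero_smul]
    by_cases h1 : DifferentiableAt ℝ f (s • (x + y))
    · rw [h1.hasGradientAt.comp_smul_add.gradient]
    · rw [gradient_eq_zero_of_not_differentiableAt]
      · simp
      · rwa [differentiableAt_comp_smul_add_iff hs]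
  by_cases hd : DifferentiableAt ℝ (fun x => f (s • (x + y)) + c * f (s • (x + y'))) x
  · have h1 : DifferentiableAt ℝ f (s • (x + y)) ∧ DifferentiableAt ℝ f (s • (x + y')) := by
      rw [← differentiableAt_comp_smul_add_iff hs, ← differentiableAt_comp_smul_add_iff hs] at h ⊢
      by_cases h1 : DifferentiableAt ℝ (fun x => f (s • (x + y))) x
      · refine ⟨h1, ?_⟩
        have := (hd.sub h1).const_mul c⁻¹
        refine this.congr_of_eventuallyEq (Filter.Eventually.of_forall fun z => ?_)
        simp [hc]
      · by_cases h2 : DifferentiableAt ℝ (fun x => f (s • (x + y'))) x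
        · refine absurd ?_ h1
          have := hd.sub (h2.const_mul c)
          refine this.congr_of_eventuallyEq (Filter.Eventually.of_forall fun z => ?_)
          simp
        · exact absurd hd ((h h1 h2).resolve_left hc)
    rw [(h1.1.hasGradientAt.comp_smul_add.add_const_mul
      h1.2.hasGradientAt.comp_smul_add c).gradient, smul_comm c s, ← smul_add s (gradient f _)]
  · rw [gradient_eq_zero_of_not_differentiableAt hd]
    simp

variable [MeasurableSpace E] [BorelSpace E]

theorem measurable_gradient (f : E → ℝ) : Measurable (gradient f) :=
  (InnerProductSpace.toDual ℝ E).symm.continuous.measurable.comp (measurable_fderiv ℝ f)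

variable {P : Measure E} [IsProbabilityMeasure P]

/-- For all but countably many weights `c`, the pathological points excluded in
`enorm_gradient_slice_combination_le` form a null set. -/
theorem countable_bad_weights {f : E → ℝ} (hf : Continuous f) {s : ℝ} (hs : s ≠ 0) :
    {c : ℝ | ¬ ∀ᵐ q ∂(P.prod P), ∀ᵐ x ∂P,
      ¬ DifferentiableAt ℝ f (s • (x + q.1)) → ¬ DifferentiableAt ℝ f (s • (x + q.2)) →
        ¬ DifferentiableAt ℝ (fun x => f (s • (x + q.1)) + c * f (s • (x + q.2))) x}.Countable := by
  set A : ℝ → Set ((E × E) × E) := fun c => {w | ¬ DifferentiableAt ℝ f (s • (w.2 + w.1.2)) ∧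
    DifferentiableAt ℝ (fun x => f (s • (x + w.1.1)) + c * f (s • (x + w.1.2))) w.2} with hA
  have hmeas (c : ℝ) : MeasurableSet (A c) := by
    refine MeasurableSet.inter ?_ ?_
    · refine (MeasurableSet.compl (measurableSet_of_differentiableAt ℝ f)).preimage ?_
      fun_prop
    · exact measurableSet_of_differentiableAt_with_param ℝ
        (f := fun (q : E × E) x => f (s • (x + q.1)) + c * f (s • (x + q.2)))
        (by simp only [Function.uncurry_def]; fun_prop)
  have hdisj : Pairwise (Function.onFun Disjoint A) := by
    intro c c' hcc
    refine Set.disjoint_left.2 fun w hw hw' => hw.1 ?_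
    rw [← differentiableAt_comp_smul_add_iff hs]
    have := (hw.2.sub hw'.2).const_mul (c - c')⁻¹
    refine this.congr_of_eventuallyEq (Filter.Eventually.of_forall fun z => ?_)
    have := sub_ne_zero.2 hcc
    simp only [Pi.sub_apply]
    field_simp
    ring
  refine (Measure.countable_meas_pos_of_disjoint_iUnion (μ := (P.prod P).prod P) hmeas hdisj).mono
    fun c hc => ?_
  rw [Set.mem_ofPred_eq] at hc ⊢
  by_contra h0
  have h0 : ((P.prod P).prod P) (A c) = 0 := by simpa using h0
  refine hc ?_
  filter_upwards [Measure.ae_ae_of_ae_prod (measure_eq_zero_iff_ae_notMem.1 h0)] with q hq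
  filter_upwards [hq] with x hx _ h2 h3
  exact hx ⟨h2, h3⟩

theorem SatisfiesPoincare.lintegral_grid_le {C : ℝ≥0∞} (hC : SatisfiesPoincare P C)
    (hCt : C ≠ ∞) {f : E → ℝ} (hf : LocallyLipschitz f) {s c : ℝ} (hs : s ^ 2 = 2⁻¹)
    (hc : ∀ᵐ q ∂(P.prod P), ∀ᵐ x ∂P,
      ¬ DifferentiableAt ℝ f (s • (x + q.1)) → ¬ DifferentiableAt ℝ f (s • (x + q.2)) →
        c = 0 ∨ ¬ DifferentiableAt ℝ (fun x => f (s • (x + q.1)) + c * f (s • (x + q.2))) x) :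
    ∫⁻ w, ‖(f (s • (w.2.1 + w.1.1)) + c * f (s • (w.2.1 + w.1.2))) -
        (f (s • (w.2.2 + w.1.1)) + c * f (s • (w.2.2 + w.1.2)))‖ₑ ^ 2
        ∂((P.prod P).prod (P.prod P)) ≤
      C * ∫⁻ w, ‖gradient f (s • (w.2.1 + w.1.1)) + c • gradient f (s • (w.2.1 + w.1.2))‖ₑ ^ 2
        ∂((P.prod P).prod (P.prod P)) := by
  have hs0 : s ≠ 0 := by rintro rfl; norm_num at hs
  have hsn : ‖s‖ₑ ^ 2 = 2⁻¹ := by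
    rw [← enorm_pow, hs, enorm_inv (by norm_num)]
    simp [enorm_eq_nnnorm]
  have hfc := hf.continuous
  have hg := measurable_gradient f
  rw [lintegral_prod (μ := P.prod P) (ν := P.prod P) _ (by fun_prop),
    lintegral_prod (μ := P.prod P) (ν := P.prod P) _ (by fun_prop),
    ← lintegral_const_mul' _ _ hCt]
  refine lintegral_mono_ae ?_
  filter_upwards [hc] with q hq
  set G : E → ℝ := fun x => f (s • (x + q.1)) + c * f (s • (x + q.2)) with hG
  have hGl : LocallyLipschitz G := hf.slice_combination s c q.1 q.2
  calc ∫⁻ p, ‖G p.1 - G p.2‖ₑ ^ 2 ∂(P.prod P) ≤ 2 * evariance G P :=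
        lintegral_enorm_sub_sq_le_evariance hGl.continuous.aestronglyMeasurable
    _ ≤ 2 * (C * ∫⁻ x, ‖gradient G x‖ₑ ^ 2 ∂P) := by gcongr; exact hC G hGl
    _ ≤ 2 * (C * ∫⁻ x, 2⁻¹ * ‖gradient f (s • (x + q.1)) +
          c • gradient f (s • (x + q.2))‖ₑ ^ 2 ∂P) := by
        gcongr 2 * (C * ?_)
        refine lintegral_mono_ae ?_
        filter_upwards [hq] with x hx
        rw [← hsn, ← mul_pow, ← enorm_smul]
        gcongr
        exact enorm_gradient_slice_combination_le hs0 x q.1 q.2 hx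
    _ = C * ∫⁻ x, ‖gradient f (s • (x + q.1)) + c • gradient f (s • (x + q.2))‖ₑ ^ 2 ∂P := by
        rw [lintegral_const_mul' _ _ (by norm_num), mul_left_comm, ← mul_assoc 2,
          ENNReal.mul_inv_cancel (by norm_num) (by norm_num), one_mul]
    _ = _ := by
        rw [← (measurePreserving_fst (μ := P) (ν := P)).lintegral_comp (f := fun x =>
          ‖gradient f (s • (x + q.1)) + c • gradient f (s • (x + q.2))‖ₑ ^ 2) (by fun_prop)]

end Slices

section Sums

variable {E : Type*} [NormedAddCommGroup E] [InnerProductSpace ℝ E] [FiniteDimensional ℝ E]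
  [MeasurableSpace E] [BorelSpace E] {P ν : Measure E} [IsProbabilityMeasure P]

theorem SatisfiesPoincare.memLp_of_sum {C : ℝ≥0∞} (hC : SatisfiesPoincare P C) (hCt : C ≠ ∞)
    {s : ℝ} (hs : s ^ 2 = 2⁻¹)
    (hν : MeasurePreserving (fun z : E × E => s • (z.2 + z.1)) (P.prod P) ν)
    {f : E → ℝ} (hf : LocallyLipschitz f) (hE : MemLp (gradient f) 2 ν) : MemLp f 2 ν := by
  have hfc := hf.continuous
  set K : E × E → ℝ := fun z => f (s • (z.2 + z.1)) with hK
  have hKc : Continuous K := by fun_prop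
  have f1 : MeasurePreserving Prod.fst (P.prod P) P := measurePreserving_fst
  have hu := (hE.comp_measurePreserving hν).comp_measurePreserving (measurePreserving_proj f1 f1)
  have h₁ : MemLp (fun w : (E × E) × E × E => K (w.1.1, w.2.1) - K (w.1.1, w.2.2)) 2
      ((P.prod P).prod (P.prod P)) := by
    refine memLp_two_of_lintegral_enorm_sq (by fun_prop) (ne_of_lt ?_)
    have h := hC.lintegral_grid_le hCt hf (c := 0) hs (ae_of_all _ fun q => ae_of_all _ (by simp))
    simp only [zero_mul, add_zero, zero_smul] at h
    refine h.trans_lt (ENNReal.mul_lt_top hCt.lt_top ?_)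
    have := hu.lintegral_enorm_sq
    simp only [Function.comp_def] at this
    rw [this]
    exact ENNReal.ofReal_lt_top
  have hsw : MeasurePreserving Prod.swap (P.prod P) (P.prod P) := Measure.measurePreserving_swap
  have h₂ : MemLp (fun w : (E × E) × E × E => K (w.1.2, w.2.2) - K (w.1.1, w.2.2)) 2
      ((P.prod P).prod (P.prod P)) := by
    have := h₁.comp_measurePreserving
      (((hsw.prod hsw).comp Measure.measurePreserving_swap))
    convert this using 1
    ext w
    simp [hK, add_comm]
  have h₃ : MemLp (fun w : (E × E) × E × E => K (w.1.1, w.2.1) - K (w.1.2, w.2.2)) 2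
      ((P.prod P).prod (P.prod P)) := by
    convert h₁.sub h₂ using 1
    ext w
    simp
  have h₄ : MemLp K 2 (P.prod P) := by
    refine memLp_two_of_lintegral_sub hKc.stronglyMeasurable ?_
    rw [← (measurePreserving_prodProdProdComm (P := P)).lintegral_comp (by fun_prop)]
    rw [h₃.lintegral_enorm_sq]
    exact ENNReal.ofReal_ne_top
  rw [← hν.map_eq]
  exact (memLp_map_measure_iff hfc.aestronglyMeasurable hν.measurable.aemeasurable).2 h₄

/-- A Poincaré inequality for the law of a normalized sum of two independent copies, improved by
the variance of the gradient. -/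
theorem SatisfiesPoincare.variance_sum_le {C : ℝ≥0∞} (hC : SatisfiesPoincare P C) (hCt : C ≠ ∞)
    {s : ℝ} (hs : s ^ 2 = 2⁻¹)
    (hν : MeasurePreserving (fun z : E × E => s • (z.2 + z.1)) (P.prod P) ν)
    {f : E → ℝ} (hf : LocallyLipschitz f) (hE : MemLp (gradient f) 2 ν) :
    4 * variance f ν ≤
      C.toReal * (3 * ∫ x, ‖gradient f x‖ ^ 2 ∂ν + ‖∫ x, gradient f x ∂ν‖ ^ 2) := by
  have hs0 : s ≠ 0 := by rintro rfl; norm_num at hs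
  have hprob : IsProbabilityMeasure ν := by
    rw [← hν.map_eq]
    exact Measure.isProbabilityMeasure_map hν.measurable.aemeasurable
  have hfL := hC.memLp_of_sum hCt hs hν hf hE
  set K : E × E → ℝ := fun z => f (s • (z.2 + z.1)) with hK
  set U : E × E → E := fun z => gradient f (s • (z.2 + z.1)) with hU
  have hKL : MemLp K 2 (P.prod P) := hfL.comp_measurePreserving hν
  have hUL : MemLp U 2 (P.prod P) := hE.comp_measurePreserving hν
  have hKs (x y : E) : K (x, y) = K (y, x) := by simp [hK, add_comm]
  have hUs (x y : E) : U (x, y) = U (y, x) := by simp [hU, add_comm]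
  have f1 : MeasurePreserving Prod.fst (P.prod P) P := measurePreserving_fst
  have f2 : MeasurePreserving Prod.snd (P.prod P) P := measurePreserving_snd
  set V := ∫ w, ⟪K (w.1.1, w.2.1), K (w.1.2, w.2.1)⟫ ∂((P.prod P).prod (P.prod P)) with hV
  set W := ∫ w, ⟪U (w.1.1, w.2.1), U (w.1.2, w.2.1)⟫ ∂((P.prod P).prod (P.prod P)) with hW
  have eS : ∫ z, ‖K z‖ ^ 2 ∂(P.prod P) = ∫ x, ‖f x‖ ^ 2 ∂ν :=
    hν.integral_comp_aestronglyMeasurable hfL.norm.integrable_sq.aestronglyMeasurable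
  have eM : ∫ z, K z ∂(P.prod P) = ∫ x, f x ∂ν :=
    hν.integral_comp_aestronglyMeasurable hfL.aestronglyMeasurable
  have eE : ∫ z, ‖U z‖ ^ 2 ∂(P.prod P) = ∫ x, ‖gradient f x‖ ^ 2 ∂ν :=
    hν.integral_comp_aestronglyMeasurable hE.norm.integrable_sq.aestronglyMeasurable
  have eU : ∫ z, U z ∂(P.prod P) = ∫ x, gradient f x ∂ν :=
    hν.integral_comp_aestronglyMeasurable hE.aestronglyMeasurable
  rw [variance_eq_sub hfL]
  simp only [Pi.pow_apply]
  rw [← eM, ← eE, ← eU, show ∫ x, f x ^ 2 ∂ν = ∫ x, ‖f x‖ ^ 2 ∂ν by simp, ← eS]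
  have hW' : 2 * W ≤ ∫ z, ‖U z‖ ^ 2 ∂(P.prod P) + ‖∫ z, U z ∂(P.prod P)‖ ^ 2 := by
    have h := integral_norm_sq_grid hUL hUs 1 (-1) (-1) 1
    have h0 : 0 ≤ ∫ w : (E × E) × E × E, ‖(1 : ℝ) • U (w.1.1, w.2.1) + (-1 : ℝ) • U (w.1.2, w.2.1)
        + (-1 : ℝ) • U (w.1.1, w.2.2) + (1 : ℝ) • U (w.1.2, w.2.2)‖ ^ 2
        ∂((P.prod P).prod (P.prod P)) :=
      integral_nonneg fun w => by positivity
    rw [h] at h0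
    linarith
  set S := ∫ z, ‖K z‖ ^ 2 ∂(P.prod P)
  set T := ∫ z, ‖U z‖ ^ 2 ∂(P.prod P)
  set m := ∫ z, K z ∂(P.prod P)
  set p := ∫ z, U z ∂(P.prod P)
  have good (c : ℝ) (hc : ∀ᵐ q ∂(P.prod P), ∀ᵐ x ∂P,
      ¬ DifferentiableAt ℝ f (s • (x + q.1)) → ¬ DifferentiableAt ℝ f (s • (x + q.2)) →
        ¬ DifferentiableAt ℝ (fun x => f (s • (x + q.1)) + c * f (s • (x + q.2))) x) :
      2 * (1 + c ^ 2) * S + 2 * (2 * c - 1 - c ^ 2) * V - 4 * c * m ^ 2 ≤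
        C.toReal * ((1 + c ^ 2) * T + 2 * c * W) := by
    have h := hC.lintegral_grid_le hCt hf hs (c := c)
      (hc.mono fun q hq => hq.mono fun x hx h1 h2 => Or.inr (hx h1 h2))
    have k11 := hKL.comp_measurePreserving (measurePreserving_proj f1 f1)
    have k21 := hKL.comp_measurePreserving (measurePreserving_proj f2 f1)
    have k12 := hKL.comp_measurePreserving (measurePreserving_proj f1 f2)
    have k22 := hKL.comp_measurePreserving (measurePreserving_proj f2 f2)
    have u11 := hUL.comp_measurePreserving (measurePreserving_proj f1 f1)
    have u21 := hUL.comp_measurePreserving (measurePreserving_proj f2 f1)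
    have eK := (((k11.add (k21.const_mul c)).sub (k12.add (k22.const_mul c)))).lintegral_enorm_sq
    have eU := (u11.add (u21.const_smul c)).lintegral_enorm_sq
    simp only [Pi.sub_apply, Pi.add_apply, Pi.smul_apply, Function.comp_apply, hK, hU] at eK eU
    rw [eK, eU, ← ENNReal.ofReal_toReal hCt, ← ENNReal.ofReal_mul ENNReal.toReal_nonneg,
      ENNReal.ofReal_le_ofReal_iff (mul_nonneg ENNReal.toReal_nonneg
        (integral_nonneg fun w => by positivity))] at h
    have gK := integral_norm_sq_grid hKL hKs 1 c (-1) (-c)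
    have gU := integral_norm_sq_grid hUL hUs 1 c 0 0
    have cK (w : (E × E) × E × E) : (1 : ℝ) • K (w.1.1, w.2.1) + c • K (w.1.2, w.2.1)
        + (-1 : ℝ) • K (w.1.1, w.2.2) + (-c) • K (w.1.2, w.2.2) =
        (f (s • (w.2.1 + w.1.1)) + c * f (s • (w.2.1 + w.1.2))) -
        (f (s • (w.2.2 + w.1.1)) + c * f (s • (w.2.2 + w.1.2))) := by
      simp only [hK, smul_eq_mul]
      ring
    have cU (w : (E × E) × E × E) : (1 : ℝ) • U (w.1.1, w.2.1) + c • U (w.1.2, w.2.1)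
        + (0 : ℝ) • U (w.1.1, w.2.2) + (0 : ℝ) • U (w.1.2, w.2.2) =
        gradient f (s • (w.2.1 + w.1.1)) + c • gradient f (s • (w.2.1 + w.1.2)) := by
      simp [hU]
    simp_rw [cK] at gK
    simp_rw [cU] at gU
    rw [gK, gU, Real.norm_eq_abs, sq_abs] at h
    convert h using 1 <;> ring
  have hdense := (countable_bad_weights (P := P) hf.continuous hs0).dense_compl ℝ
  have hclosed : IsClosed {c : ℝ | 2 * (1 + c ^ 2) * S + 2 * (2 * c - 1 - c ^ 2) * V
      - 4 * c * m ^ 2 ≤ C.toReal * ((1 + c ^ 2) * T + 2 * c * W)} :=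
    isClosed_le (by fun_prop) (by fun_prop)
  have h1 := hclosed.closure_subset_iff.2 (fun c hc => good c (by simpa using hc))
    (hdense.closure_eq ▸ Set.mem_univ (1 : ℝ))
  simp only [Set.mem_ofPred_eq] at h1
  have h2 := mul_le_mul_of_nonneg_left hW' (ENNReal.toReal_nonneg (a := C))
  linarith

end Sums

theorem le_sqrt_div_add_mul_sqrt {B I σ κ θ N v w : ℝ} (hB : 0 < B) (hI : 0 ≤ I) (hσ : 0 ≤ σ)
    (hθ : 0 ≤ θ) (hN : 0 ≤ N) (h : B * (1 - θ ^ 2) * I ≤ v) (hv : v ≤ B * I) (hw0 : 0 ≤ w)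
    (hw : w ≤ σ * N ^ 2) (hκ : κ ^ 2 ≤ v * w)
    (hκN : (B * N ^ 2 - κ) ^ 2 ≤ (B * I - v) * (B * N ^ 2)) :
    N ≤ (√(σ / B) + θ) * √I := by
  have hss : √(σ / B) ^ 2 * B = σ := by rw [Real.sq_sqrt (by positivity)]; field_simp
  have hrr : √I ^ 2 = I := Real.sq_sqrt hI
  have hs0 : 0 ≤ √(σ / B) := Real.sqrt_nonneg _
  have hr0 : 0 ≤ √I := Real.sqrt_nonneg _
  generalize √(σ / B) = s at *
  generalize √I = r at *
  subst hss hrr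
  have h1 : κ ≤ B * r * s * N := by
    refine le_trans (le_abs_self κ) (abs_le_of_sq_le_sq ?_ (by positivity))
    calc κ ^ 2 ≤ v * w := hκ
      _ ≤ (B * r ^ 2) * (s ^ 2 * B * N ^ 2) := mul_le_mul hv hw hw0 (by positivity)
      _ = _ := by ring
  have h2 : B * N ^ 2 - κ ≤ B * θ * r * N := by
    refine le_trans (le_abs_self _) (abs_le_of_sq_le_sq ?_ (by positivity))
    calc (B * N ^ 2 - κ) ^ 2 ≤ (B * r ^ 2 - v) * (B * N ^ 2) := hκN
      _ ≤ (B * θ ^ 2 * r ^ 2) * (B * N ^ 2) := by gcongr; linarith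
      _ = _ := by ring
  rcases hN.eq_or_lt with rfl | hN
  · positivity
  · have : (B * N) * N ≤ (B * N) * ((s + θ) * r) := by linarith
    exact le_of_mul_le_mul_left this (by positivity)

section Constants

theorem ProbabilityTheory.covariance_sq_le_variance_mul_variance {Ω : Type*} [MeasurableSpace Ω]
    {μ : Measure Ω} [IsFiniteMeasure μ] {Y Z : Ω → ℝ} (hY : MemLp Y 2 μ) (hZ : MemLp Z 2 μ) :
    covariance Y Z μ ^ 2 ≤ variance Y μ * variance Z μ := by
  have h (t : ℝ) :
      0 ≤ variance Z μ * (t * t) + 2 * covariance Y Z μ * t + variance Y μ := by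
    have h0 := variance_nonneg (Y + t • Z) μ
    rw [variance_add hY (hZ.const_smul t), variance_smul, covariance_smul_right] at h0
    linarith
  have := discrim_le_zero h
  rw [discrim] at this
  linarith

variable {d : ℕ}

theorem satisfiesPoincare_of_poincareConst_lt {μ : Measure (EuclideanSpace ℝ (Fin d))} {C : ℝ≥0∞}
    (h : poincareConst μ < C) : SatisfiesPoincare μ C := by
  obtain ⟨C', hC', hlt⟩ := sInf_lt_iff.1 h
  exact fun f hf => (hC' f hf).trans (by gcongr; rfl)

theorem poincareConst_le {μ : Measure (EuclideanSpace ℝ (Fin d))} {C : ℝ≥0∞}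
    (h : SatisfiesPoincare μ C) : poincareConst μ ≤ C :=
  sInf_le h

theorem le_mul_of_forall_gt {a b x : ℝ} (hb : 0 ≤ b) (h : ∀ y, x < y → a ≤ y * b) : a ≤ x * b := by
  refine le_of_forall_pos_le_add fun ε hε => ?_
  have h1 := h (x + ε / (b + 1)) (by linarith [div_pos hε (by linarith : 0 < b + 1)])
  have h2 : ε / (b + 1) * b ≤ ε := by
    rw [div_mul_eq_mul_div, div_le_iff₀ (by linarith)]
    nlinarith
  linarith

variable {μ : Measure (EuclideanSpace ℝ (Fin d))}

theorem lt_ofReal_of_toReal_lt {x : ℝ≥0∞} (hx : x ≠ ∞) {y : ℝ} (h : x.toReal < y) :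
    x < ENNReal.ofReal y :=
  (ENNReal.lt_ofReal_iff_toReal_lt hx).2 h

variable [IsProbabilityMeasure μ]

theorem memLp_of_memLp_gradient (hp : poincareConst μ ≠ ∞) {f : EuclideanSpace ℝ (Fin d) → ℝ}
    (hf : LocallyLipschitz f) (hE : MemLp (gradient f) 2 μ) : MemLp f 2 μ := by
  rw [← evariance_lt_top_iff_memLp hf.continuous.aestronglyMeasurable]
  obtain ⟨y, hy⟩ := exists_gt (poincareConst μ).toReal
  refine (satisfiesPoincare_of_poincareConst_lt (lt_ofReal_of_toReal_lt hp hy) f hf).trans_lt ?_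
  rw [hE.lintegral_enorm_sq]
  exact ENNReal.mul_lt_top ENNReal.ofReal_lt_top ENNReal.ofReal_lt_top

theorem variance_le_poincareConst_mul (hp : poincareConst μ ≠ ∞)
    {f : EuclideanSpace ℝ (Fin d) → ℝ} (hf : LocallyLipschitz f) (hE : MemLp (gradient f) 2 μ) :
    variance f μ ≤ (poincareConst μ).toReal * ∫ x, ‖gradient f x‖ ^ 2 ∂μ := by
  have hb : 0 ≤ ∫ x, ‖gradient f x‖ ^ 2 ∂μ := integral_nonneg fun x => by positivity
  refine le_mul_of_forall_gt hb fun y hy => ?_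
  have hy0 : 0 ≤ y := ENNReal.toReal_nonneg.trans hy.le
  have h := satisfiesPoincare_of_poincareConst_lt (lt_ofReal_of_toReal_lt hp hy) f hf
  rwa [hE.lintegral_enorm_sq, ← ofReal_variance (memLp_of_memLp_gradient hp hf hE),
    ← ENNReal.ofReal_mul hy0, ENNReal.ofReal_le_ofReal_iff (mul_nonneg hy0 hb)] at h

theorem hasGradientAt_inner (a x : EuclideanSpace ℝ (Fin d)) :
    HasGradientAt (fun x => ⟪a, x⟫) a x := by
  rw [hasGradientAt_iff_hasFDerivAt]
  exact (InnerProductSpace.toDual ℝ _ a).hasFDerivAt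

theorem locallyLipschitz_inner (a : EuclideanSpace ℝ (Fin d)) :
    LocallyLipschitz (fun x => ⟪a, x⟫) :=
  (InnerProductSpace.toDual ℝ _ a).lipschitz.locallyLipschitz

theorem gradient_inner (a : EuclideanSpace ℝ (Fin d)) :
    gradient (fun x => ⟪a, x⟫) = fun _ => a :=
  gradient_eq fun x => hasGradientAt_inner a x

theorem memLp_inner (hp : poincareConst μ ≠ ∞) (a : EuclideanSpace ℝ (Fin d)) :
    MemLp (fun x => ⟪a, x⟫) 2 μ :=
  memLp_of_memLp_gradient hp (locallyLipschitz_inner a) (by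
    rw [gradient_inner]; exact memLp_const a)

theorem variance_inner_le_poincareConst (hp : poincareConst μ ≠ ∞)
    (a : EuclideanSpace ℝ (Fin d)) :
    variance (fun x => ⟪a, x⟫) μ ≤ (poincareConst μ).toReal * ‖a‖ ^ 2 := by
  have h := variance_le_poincareConst_mul hp (locallyLipschitz_inner a)
    (by rw [gradient_inner]; exact memLp_const a)
  simpa [gradient_inner] using h

theorem maxDirVar_nonneg (μ : Measure (EuclideanSpace ℝ (Fin d))) : 0 ≤ maxDirVar μ :=
  Real.iSup_nonneg fun _ => variance_nonneg _ _

theorem maxDirVar_le_poincareConst (hp : poincareConst μ ≠ ∞) :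
    maxDirVar μ ≤ (poincareConst μ).toReal :=
  Real.iSup_le (fun a => by simpa [a.2] using variance_inner_le_poincareConst hp a.1)
    ENNReal.toReal_nonneg

theorem variance_inner_le_maxDirVar (hp : poincareConst μ ≠ ∞)
    (a : EuclideanSpace ℝ (Fin d)) :
    variance (fun x => ⟪a, x⟫) μ ≤ maxDirVar μ * ‖a‖ ^ 2 := by
  rcases eq_or_ne a 0 with rfl | ha
  · simpa using variance_inner_le_poincareConst hp 0
  have hn : ‖a‖ ≠ 0 := norm_ne_zero_iff.2 ha
  have hb : BddAbove (Set.range fun α : {a : EuclideanSpace ℝ (Fin d) // ‖a‖ = 1} =>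
      variance (fun x => ⟪(α : EuclideanSpace ℝ (Fin d)), x⟫) μ) := by
    refine ⟨(poincareConst μ).toReal, ?_⟩
    rintro _ ⟨α, rfl⟩
    simpa [α.2] using variance_inner_le_poincareConst hp α.1
  have h := le_ciSup hb ⟨‖a‖⁻¹ • a, by rw [norm_smul]; simp [hn]⟩
  have e : variance (fun x => ⟪a, x⟫) μ
      = ‖a‖ ^ 2 * variance (fun x => ⟪‖a‖⁻¹ • a, x⟫) μ := by
    rw [← variance_const_mul]
    simp_rw [real_inner_smul_left, mul_inv_cancel_left₀ hn]
  rw [e, mul_comm]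
  exact mul_le_mul_of_nonneg_right h (by positivity)

/-- Approximate Euler–Lagrange equation against linear test functions. -/
theorem sq_poincareConst_mul_inner_sub_covariance_le (hp : poincareConst μ ≠ ∞)
    {f : EuclideanSpace ℝ (Fin d) → ℝ} (hf : LocallyLipschitz f) (hE : MemLp (gradient f) 2 μ)
    (a : EuclideanSpace ℝ (Fin d)) :
    ((poincareConst μ).toReal * ⟪∫ x, gradient f x ∂μ, a⟫
        - covariance f (fun x => ⟪a, x⟫) μ) ^ 2 ≤
      ((poincareConst μ).toReal * ∫ x, ‖gradient f x‖ ^ 2 ∂μ - variance f μ) *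
        ((poincareConst μ).toReal * ‖a‖ ^ 2) := by
  set B := (poincareConst μ).toReal
  have hB : 0 ≤ B := ENNReal.toReal_nonneg
  have hfL := memLp_of_memLp_gradient hp hf hE
  have haL := memLp_inner hp a
  have key (t : ℝ) : 0 ≤ (B * ‖a‖ ^ 2) * (t * t) +
      2 * (B * ⟪∫ x, gradient f x ∂μ, a⟫ - covariance f (fun x => ⟪a, x⟫) μ) * t +
      (B * ∫ x, ‖gradient f x‖ ^ 2 ∂μ - variance f μ) := by
    set g : EuclideanSpace ℝ (Fin d) → ℝ := fun x => f x + t * ⟪a, x⟫ with hg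
    have hgl : LocallyLipschitz g :=
      hf.add ((lipschitzWith_smul t).locallyLipschitz.comp (locallyLipschitz_inner a))
    have hgrad (x) : ‖gradient g x‖ ≤ ‖gradient f x + t • a‖ := by
      by_cases hd : DifferentiableAt ℝ f x
      · rw [(hd.hasGradientAt.add_const_mul (hasGradientAt_inner a x) t).gradient]
      · rw [gradient_eq_zero_of_not_differentiableAt]
        · simp
        · intro h
          refine hd ?_
          have := h.sub ((hasGradientAt_inner a x).differentiableAt.const_mul t)
          refine this.congr_of_eventuallyEq (Filter.Eventually.of_forall fun z => ?_)
          simp [hg]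
    have hsum : MemLp (fun x => gradient f x + t • a) 2 μ := hE.add (memLp_const _)
    have hgE : MemLp (gradient g) 2 μ :=
      hsum.mono (measurable_gradient g).aestronglyMeasurable (ae_of_all _ hgrad)
    have h1 := variance_le_poincareConst_mul hp hgl hgE
    have h2 : ∫ x, ‖gradient g x‖ ^ 2 ∂μ ≤ ∫ x, ‖gradient f x + t • a‖ ^ 2 ∂μ :=
      integral_mono hgE.norm.integrable_sq hsum.norm.integrable_sq fun x => by
        have := hgrad x
        dsimp only
        gcongr
    have h3 : ∫ x, ‖gradient f x + t • a‖ ^ 2 ∂μ = ∫ x, ‖gradient f x‖ ^ 2 ∂μ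
        + 2 * t * ⟪∫ x, gradient f x ∂μ, a⟫ + t ^ 2 * ‖a‖ ^ 2 := by
      have hi := hE.norm.integrable_sq
      have hi' : Integrable (gradient f) μ := hE.integrable (by norm_num)
      have hi'' : Integrable (fun x => ⟪a, gradient f x⟫) μ := hi'.const_inner a
      simp_rw [norm_add_sq_real, real_inner_smul_right, real_inner_comm a, norm_smul, mul_pow]
      rw [integral_add (by fun_prop) (by fun_prop), integral_add (by fun_prop) (by fun_prop),
        integral_const_mul, integral_const_mul, integral_inner hi']
      simp
      ring
    have h4 : variance g μ = variance f μ + 2 * t * covariance f (fun x => ⟪a, x⟫) μ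
        + t ^ 2 * variance (fun x => ⟪a, x⟫) μ := by
      have h := variance_add hfL (haL.const_smul t)
      rw [variance_smul, covariance_smul_right] at h
      rw [show g = f + t • fun x => ⟪a, x⟫ from rfl, h]
      ring
    have h5 := mul_le_mul_of_nonneg_left h2 hB
    rw [h3] at h5
    nlinarith [mul_nonneg (sq_nonneg t) (variance_nonneg (fun x => ⟪a, x⟫) μ)]
  have := discrim_le_zero key
  rw [discrim] at this
  linarith

theorem norm_integral_gradient_le (hp : poincareConst μ ≠ ∞) (h0 : 0 < (poincareConst μ).toReal)
    {f : EuclideanSpace ℝ (Fin d) → ℝ} (hf : LocallyLipschitz f) (hE : MemLp (gradient f) 2 μ)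
    {θ : ℝ} (hθ : 0 ≤ θ)
    (h : (poincareConst μ).toReal * (1 - θ ^ 2) * ∫ x, ‖gradient f x‖ ^ 2 ∂μ ≤ variance f μ) :
    ‖∫ x, gradient f x ∂μ‖ ≤ (√(maxDirVar μ / (poincareConst μ).toReal) + θ) *
      √(∫ x, ‖gradient f x‖ ^ 2 ∂μ) := by
  have hfL := memLp_of_memLp_gradient hp hf hE
  have hEL := sq_poincareConst_mul_inner_sub_covariance_le hp hf hE (∫ x, gradient f x ∂μ)
  rw [real_inner_self_eq_norm_sq] at hEL
  exact le_sqrt_div_add_mul_sqrt h0 (integral_nonneg fun x => by positivity) (maxDirVar_nonneg μ)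
    hθ (norm_nonneg _) h (variance_le_poincareConst_mul hp hf hE) (variance_nonneg _ _)
    (variance_inner_le_maxDirVar hp _)
    (covariance_sq_le_variance_mul_variance hfL (memLp_inner hp _)) hEL

end Constants

theorem le_sub_stability_ratio {A B v : ℝ} (hA : 0 ≤ A) (hv : 0 ≤ v) (hvB : v ≤ B)
    (h : 0 < B → B ≤ A / 4 * (3 + v / B)) :
    B ≤ A - A / 4 * ((B - v) ^ 2 / ((B - v) ^ 2 + B * v)) := by
  rcases (hv.trans hvB).eq_or_lt with rfl | hB
  · have : v = 0 := le_antisymm hvB hv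
    subst this
    simpa using hA
  · have hden : 0 < (B - v) ^ 2 + B * v := by
      rcases hv.eq_or_lt with rfl | hv'
      · simp only [sub_zero, mul_zero, add_zero]; positivity
      · positivity
    have hr : (B - v) ^ 2 / ((B - v) ^ 2 + B * v) ≤ 1 - v / B := by
      rw [one_sub_div hB.ne', div_le_div_iff₀ hden hB]
      nlinarith [mul_nonneg (sub_nonneg.2 hvB) (sq_nonneg v)]
    have := mul_le_mul_of_nonneg_left hr (by positivity : 0 ≤ A / 4)
    linarith [h hB]

/-- **Stability of subadditivity for i.i.d. sums.** For `X₁, X₂` i.i.d. with law `ν₁` and `ν₂`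
the law of `(X₁ + X₂)/√2`, with `σ² := σ²(ν₂)`,
`C_p(ν₂) ≤ C_p(ν₁) − (C_p(ν₁)/4) · (C_p(ν₂) − σ²)²/((C_p(ν₂) − σ²)² + C_p(ν₂)σ²)`. -/
theorem poincareConst_iid_stability {d : ℕ} (ν₁ : Measure (EuclideanSpace ℝ (Fin d)))
    [IsProbabilityMeasure ν₁] (h2 : Integrable (fun x => ‖x‖ ^ 2) ν₁)
    (hp : poincareConst ν₁ ≠ ⊤)
    (ν₂ : Measure (EuclideanSpace ℝ (Fin d)))
    (hν₂ : ν₂ = Measure.map (fun x => (Real.sqrt 2)⁻¹ • x) (ν₁ ∗ ν₁)) :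
    poincareConst ν₂ ≠ ⊤ ∧
      (poincareConst ν₂).toReal ≤
        (poincareConst ν₁).toReal -
          (poincareConst ν₁).toReal / 4 *
            (((poincareConst ν₂).toReal - maxDirVar ν₂) ^ 2 /
              (((poincareConst ν₂).toReal - maxDirVar ν₂) ^ 2 +
                (poincareConst ν₂).toReal * maxDirVar ν₂)) := by
  have hs : (√2)⁻¹ ^ 2 = (2 : ℝ)⁻¹ := by rw [inv_pow, Real.sq_sqrt (by norm_num)]
  have hν : MeasurePreserving (fun z : EuclideanSpace ℝ (Fin d) × EuclideanSpace ℝ (Fin d) =>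
      (√2)⁻¹ • (z.2 + z.1)) (ν₁.prod ν₁) ν₂ := by
    refine ⟨by fun_prop, ?_⟩
    rw [hν₂, Measure.conv, Measure.map_map (by fun_prop) (by fun_prop)]
    congr 1
    ext1 z
    simp [add_comm]
  have hprob : IsProbabilityMeasure ν₂ := by
    rw [← hν.map_eq]
    exact Measure.isProbabilityMeasure_map hν.measurable.aemeasurable
  set A := (poincareConst ν₁).toReal with hAdef
  have hA : 0 ≤ A := ENNReal.toReal_nonneg
  have hsat {y : ℝ} (hy : A < y) : SatisfiesPoincare ν₁ (ENNReal.ofReal y) :=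
    satisfiesPoincare_of_poincareConst_lt (lt_ofReal_of_toReal_lt hp hy)
  have hmem {f : EuclideanSpace ℝ (Fin d) → ℝ} (hf : LocallyLipschitz f)
      (hE : MemLp (gradient f) 2 ν₂) : MemLp f 2 ν₂ := by
    obtain ⟨y, hy⟩ := exists_gt A
    exact (hsat hy).memLp_of_sum ENNReal.ofReal_ne_top hs hν hf hE
  have hvar {f : EuclideanSpace ℝ (Fin d) → ℝ} (hf : LocallyLipschitz f)
      (hE : MemLp (gradient f) 2 ν₂) : 4 * variance f ν₂ ≤
        A * (3 * ∫ x, ‖gradient f x‖ ^ 2 ∂ν₂ + ‖∫ x, gradient f x ∂ν₂‖ ^ 2) := by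
    have hb : 0 ≤ ∫ x, ‖gradient f x‖ ^ 2 ∂ν₂ := integral_nonneg fun x => by positivity
    refine le_mul_of_forall_gt (by positivity) fun y hy => ?_
    have h := (hsat hy).variance_sum_le ENNReal.ofReal_ne_top hs hν hf hE
    rwa [ENNReal.toReal_ofReal (hA.trans hy.le)] at h
  have hp₂ : poincareConst ν₂ ≠ ∞ := by
    refine ne_top_of_le_ne_top (ENNReal.ofReal_ne_top (r := A + 1)) (poincareConst_le ?_)
    intro f hf
    by_cases hE : ∫⁻ x, ‖gradient f x‖ₑ ^ 2 ∂ν₂ = ∞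
    · rw [hE, ENNReal.mul_top (by simp; linarith)]
      exact le_top
    · have hE' := memLp_two_of_lintegral_enorm_sq (measurable_gradient f).aestronglyMeasurable hE
      have hJ : ‖∫ x, gradient f x ∂ν₂‖ ^ 2 ≤ ∫ x, ‖gradient f x‖ ^ 2 ∂ν₂ := by
        have h := variance_nonneg (fun x => ‖gradient f x‖) ν₂
        rw [variance_eq_sub hE'.norm] at h
        have h' := norm_integral_le_integral_norm (μ := ν₂) (gradient f)
        have h'' := pow_le_pow_left₀ (norm_nonneg _) h' 2
        simp only [Pi.pow_apply] at h
        linarith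
      have h := hvar hf hE'
      rw [hE'.lintegral_enorm_sq, ← ofReal_variance (hmem hf hE'),
        ← ENNReal.ofReal_mul (by linarith)]
      refine ENNReal.ofReal_le_ofReal ?_
      have := mul_le_mul_of_nonneg_left hJ hA
      nlinarith [norm_nonneg (∫ x, gradient f x ∂ν₂)]
  refine ⟨hp₂, le_sub_stability_ratio hA (maxDirVar_nonneg ν₂) (maxDirVar_le_poincareConst hp₂)
    fun hB => ?_⟩
  have hθ (θ : ℝ) (h0 : 0 < θ) (h1 : θ < 1) : (poincareConst ν₂).toReal * (1 - θ ^ 2) ≤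
      A / 4 * (3 + (√(maxDirVar ν₂ / (poincareConst ν₂).toReal) + θ) ^ 2) := by
    set c := (poincareConst ν₂).toReal * (1 - θ ^ 2) with hc
    have hθ2 : 0 < 1 - θ ^ 2 := by nlinarith
    have hc0 : 0 < c := by positivity
    have hcB : c < (poincareConst ν₂).toReal := by
      have : 0 < (poincareConst ν₂).toReal * θ ^ 2 := by positivity
      linarith
    have hlt : ENNReal.ofReal c < poincareConst ν₂ :=
      (ENNReal.ofReal_lt_iff_lt_toReal hc0.le hp₂).2 hcB
    have hnot : ¬ SatisfiesPoincare ν₂ (ENNReal.ofReal c) :=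
      fun h => (poincareConst_le h).not_gt hlt
    simp only [SatisfiesPoincare, not_forall, not_le] at hnot
    obtain ⟨f, hf, hlt⟩ := hnot
    have hE : MemLp (gradient f) 2 ν₂ := by
      refine memLp_two_of_lintegral_enorm_sq (measurable_gradient f).aestronglyMeasurable
        fun hE => ?_
      rw [hE, ENNReal.mul_top (by simpa using hc0)] at hlt
      exact not_top_lt hlt
    have hb : 0 ≤ ∫ x, ‖gradient f x‖ ^ 2 ∂ν₂ := integral_nonneg fun x => by positivity
    rw [hE.lintegral_enorm_sq, ← ofReal_variance (hmem hf hE), ← ENNReal.ofReal_mul hc0.le] at hlt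
    have hlt := (ENNReal.ofReal_lt_ofReal_iff_of_nonneg (by positivity)).1 hlt
    have hm := norm_integral_gradient_le hp₂ hB hf hE h0.le hlt.le
    have hle := variance_le_poincareConst_mul hp₂ hf hE
    have hpos : 0 < ∫ x, ‖gradient f x‖ ^ 2 ∂ν₂ := by
      refine hb.lt_of_ne fun h => ?_
      rw [← h] at hlt hle
      linarith
    have hm2 := pow_le_pow_left₀ (norm_nonneg _) hm 2
    rw [mul_pow, Real.sq_sqrt hb] at hm2
    have h4 := hvar hf hE
    have h5 := mul_le_mul_of_nonneg_left hm2 hA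
    refine le_of_mul_le_mul_right ?_ hpos
    linarith
  have hlim : Filter.Tendsto (fun θ : ℝ => (poincareConst ν₂).toReal * (1 - θ ^ 2))
      (nhdsWithin 0 (Set.Ioi 0)) (nhds ((poincareConst ν₂).toReal * (1 - 0 ^ 2))) :=
    (Continuous.tendsto (by fun_prop) 0).mono_left nhdsWithin_le_nhds
  have hlim' : Filter.Tendsto
      (fun θ : ℝ => A / 4 * (3 + (√(maxDirVar ν₂ / (poincareConst ν₂).toReal) + θ) ^ 2))
      (nhdsWithin 0 (Set.Ioi 0))
      (nhds (A / 4 * (3 + (√(maxDirVar ν₂ / (poincareConst ν₂).toReal) + 0) ^ 2))) :=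
    (Continuous.tendsto (by fun_prop) 0).mono_left nhdsWithin_le_nhds
  have h := le_of_tendsto_of_tendsto hlim hlim' (by
    filter_upwards [Ioo_mem_nhdsGT (zero_lt_one' ℝ)] with θ h
    exact hθ θ h.1 h.2)
  rw [add_zero, Real.sq_sqrt (div_nonneg (maxDirVar_nonneg ν₂) hB.le)] at h
  simpa using h
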